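/- arXiv:2311.02388 — 4 statements merged into one kernel-verified Lean document; each statement's English description precedes it below -/
import Mathlib

section
/- For all natural numbers p ≤ q, the value f(p,q) is given by: f(p,q) = 1 if p = q; f(p,q) = F(p,q) if p < q < 2p − ⌊|p−2|/2⌋ (an inequality of integers); and f(p,q) = 2p if q ≥ 2p − ⌊|p−2|/2⌋ (as integers). -/
/-!
Away from the diagonal the claimed value of `f p q` is `2 * halfVal p q`, where
`halfVal p q = min p q ⌊2(p+q-1)/5⌋` except that `halfVal 1 2 = halfVal 2 1 = 1`; on the
diagonal it is `1`. That this function `val` satisfies the mex recursion is shown by strong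
induction on `p`. A move from `(p, q)` yields `(a, b)` and `(c, d)` with `a + c = p - 1` and
`b + d = q - 1`.

* The value itself is not an option (`val_not_option`). For `p = q`, the two parts are both on
  or both off the diagonal, so the option is even, hence not `1`. For `p ≠ q`, an option with
  exactly one diagonal part is odd, and otherwise `halfVal a b + halfVal c d < halfVal p q`, so
  the Nim-sum, which is at most the sum, is too small. The one failure of this inequality,
  where both parts are the exceptional positions, has Nim-sum `0`.
* Every smaller value is an option (`exists_option`); let `p < q`. Odd values `2k+1` come from
  a diagonal part `(a, a)` and a part `(c, c + (q-p))`: along this diagonal line `halfVal`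
  starts at `0` and grows by at most `1` per step. The value `0` is the move `h p ^^^ h q`.
  Even values `2k` with `k > 0` come from a part `(a, 0)` of value `0` and a part `(i, q-1)`
  with `i ≤ p-2`, again by small steps. This misses at most the top value; then either
  `(0, 1)` and `(p-1, q-2)` reach it, or `p + q ≡ 1 (mod 5)`, the required `halfVal p q - 1` is
  odd, and an exceptional part `(1, 2)` or `(2, 1)` flips the last bit of `halfVal p q - 2`.
-/

/-- `mex S` is the least natural number not belonging to `S`. -/
noncomputable def mex (S : Set ℕ) : ℕ := sInf {n : ℕ | n ∉ S}

/-- `h 0 = 0` and `h n = 1` for all `n ≥ 1`. -/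
def h : ℕ → ℕ
  | 0 => 0
  | _ + 1 => 1

/-- The nimber of the Circular sprout game `CS₄(𝒫₄ : p,1,q,1)`, defined by strong
recursion: `f p q` is the mex of the set consisting of `h p ^^^ h q` together with all
values `f p' q' ^^^ f (p-1-p') (q-1-q')` for `0 ≤ p' ≤ p-1` and `0 ≤ q' ≤ q-1`. -/
noncomputable def f (p q : ℕ) : ℕ :=
  mex ({h p ^^^ h q} ∪
    ⋃ (p' : ℕ) (_ : p' < p) (q' : ℕ) (_ : q' < q),
      {f p' q' ^^^ f (p - 1 - p') (q - 1 - q')})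
termination_by p
decreasing_by
  · omega
  · omega

/-- `idx p q` is the unique element of `{1,2,3,4,5}` congruent to `p + q` modulo `5`. -/
def idx (p q : ℕ) : ℕ := if (p + q) % 5 = 0 then 5 else (p + q) % 5

/-- `F p q = (4/5)·(p + q − idx p q) + 2·⌊idx p q / 4⌋`. -/
def F (p q : ℕ) : ℕ := 4 * ((p + q - idx p q) / 5) + 2 * (idx p q / 4)

/-! ### The closed form -/

/-- Half of the value `f p q` for `p ≠ q`. The formula is `min p q ⌊2(p+q-1)/5⌋` with the single
exception of the position `{1, 2}`. -/
def halfVal (p q : ℕ) : ℕ :=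
  if p = 1 ∧ q = 2 ∨ p = 2 ∧ q = 1 then 1 else min (min p q) (2 * (p + q - 1) / 5)

/-- The closed form of `f`, for arguments in either order. -/
def val (p q : ℕ) : ℕ := if p = q then 1 else 2 * halfVal p q

/-- Linear inequalities that determine `halfVal a b` off the diagonal. -/
lemma halfVal_spec {a b : ℕ} (hab : a ≠ b) :
    halfVal a b ≤ a ∧ halfVal a b ≤ b ∧
      (a + b = 3 ∧ (halfVal a b = a ∨ halfVal a b = b) ∨
        a + b ≠ 3 ∧ 5 * halfVal a b + 2 ≤ 2 * (a + b) ∧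
          (halfVal a b = a ∨ halfVal a b = b ∨ 2 * (a + b) ≤ 5 * halfVal a b + 6)) := by
  unfold halfVal; split_ifs <;> omega

lemma halfVal_comm (p q : ℕ) : halfVal p q = halfVal q p := by
  unfold halfVal; split_ifs <;> omega

lemma val_comm (p q : ℕ) : val p q = val q p := by
  unfold val; rw [halfVal_comm]; split_ifs <;> omega

/-! ### Nim-sums and sequences with small steps -/

lemma two_mul_xor_two_mul (a b : ℕ) : (2 * a) ^^^ (2 * b) = 2 * (a ^^^ b) := by
  apply Nat.eq_of_testBit_eq
  intro i
  cases i with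
  | zero => simp [Nat.testBit_zero]
  | succ n => simp [Nat.testBit_succ, Nat.xor_div_two]

lemma one_xor_two_mul (a : ℕ) : 1 ^^^ (2 * a) = 2 * a + 1 := by
  apply Nat.eq_of_testBit_eq
  intro i
  cases i with
  | zero => simp [Nat.testBit_zero]
  | succ n =>
    have : (2 * a + 1) / 2 = a := by omega
    simp [Nat.testBit_succ, Nat.xor_div_two, this]

lemma xor_le_sum (a b : ℕ) : a ^^^ b ≤ a + b := by
  induction a using Nat.strong_induction_on generalizing b with
  | _ a ih =>
    rcases Nat.eq_zero_or_pos a with rfl | ha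
    · simp
    · have h1 := ih (a / 2) (by omega) (b / 2)
      have h2 : (a ^^^ b) / 2 = a / 2 ^^^ b / 2 := Nat.xor_div_two
      have h3 : (a ^^^ b) % 2 = (a + b) % 2 := Nat.xor_mod_two_eq
      omega

/-- A sequence starting at `0` with steps of size at most `1` attains every value up to any of
its terms. -/
lemma exists_eq_of_small_steps (u : ℕ → ℕ) (h0 : u 0 = 0) (n : ℕ)
    (hs : ∀ i < n, u (i + 1) ≤ u i + 1) (k : ℕ) (hk : k ≤ u n) : ∃ i ≤ n, u i = k := by
  induction n with
  | zero => exact ⟨0, le_rfl, by omega⟩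
  | succ n ih =>
    by_cases hn : k ≤ u n
    · obtain ⟨i, hi, e⟩ := ih (fun i hi => hs i (by omega)) hn
      exact ⟨i, by omega, e⟩
    · exact ⟨n + 1, le_rfl, by have := hs n (by omega); omega⟩

/-! ### The value is not an option -/

lemma val_pos {p q : ℕ} (hp : 0 < p) (hq : 0 < q) : 0 < val p q := by
  unfold val halfVal; split_ifs <;> omega

/-- The halves of the two parts of a move sum to less than the half of the position moved from,
unless both parts are the exceptional position `{1, 2}`, in which case the two halves agree. -/
lemma halfVal_add_lt {a b c d : ℕ} (hab : a ≠ b) (hcd : c ≠ d)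
    (hne : a + c + 1 ≠ b + d + 1) :
    halfVal a b + halfVal c d < halfVal (a + c + 1) (b + d + 1) ∨
      halfVal a b = halfVal c d := by
  have h1 := halfVal_spec hab
  have h2 := halfVal_spec hcd
  have h3 := halfVal_spec hne
  omega

lemma val_not_option (a b c d : ℕ) : val a b ^^^ val c d ≠ val (a + c + 1) (b + d + 1) := by
  have hpos := val_pos (p := a + c + 1) (q := b + d + 1) (by omega) (by omega)
  intro he
  by_cases hab : a = b <;> by_cases hcd : c = d
  · have h1 : val a b = 1 := if_pos hab
    have h2 : val c d = 1 := if_pos hcd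
    rw [h1, h2, Nat.xor_self] at he
    omega
  · have h1 : val a b = 1 := if_pos hab
    have h2 : val c d = 2 * halfVal c d := if_neg hcd
    have h3 : val (a + c + 1) (b + d + 1) = 2 * halfVal (a + c + 1) (b + d + 1) :=
      if_neg (by omega)
    rw [h1, h2, h3, one_xor_two_mul] at he
    omega
  · have h1 : val a b = 2 * halfVal a b := if_neg hab
    have h2 : val c d = 1 := if_pos hcd
    have h3 : val (a + c + 1) (b + d + 1) = 2 * halfVal (a + c + 1) (b + d + 1) :=
      if_neg (by omega)
    rw [h1, h2, h3, Nat.xor_comm, one_xor_two_mul] at he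
    omega
  · have h1 : val a b = 2 * halfVal a b := if_neg hab
    have h2 : val c d = 2 * halfVal c d := if_neg hcd
    rw [h1, h2, two_mul_xor_two_mul] at he
    by_cases hpq : a + c + 1 = b + d + 1
    · have h3 : val (a + c + 1) (b + d + 1) = 1 := if_pos hpq
      omega
    · have h3 : val (a + c + 1) (b + d + 1) = 2 * halfVal (a + c + 1) (b + d + 1) :=
        if_neg hpq
      rcases halfVal_add_lt hab hcd hpq with hlt | heq
      · have := xor_le_sum (halfVal a b) (halfVal c d)
        omega
      · rw [heq, Nat.xor_self] at he
        omega

/-! ### Every smaller value is an option -/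

/-- Values `2k+1`, from a part on the diagonal. -/
lemma exists_odd_option {p q : ℕ} (hpq : p < q) {k : ℕ} (hk : k < halfVal p q) :
    ∃ a b c d, a + c + 1 = p ∧ b + d + 1 = q ∧ val a b ^^^ val c d = 2 * k + 1 := by
  have hstep : ∀ i, halfVal (i + 1) (i + 1 + (q - p)) ≤ halfVal i (i + (q - p)) + 1 := by
    intro i
    have h1 := halfVal_spec (a := i + 1) (b := i + 1 + (q - p)) (by omega)
    have h2 := halfVal_spec (a := i) (b := i + (q - p)) (by omega)
    omega
  have hspec := halfVal_spec hpq.ne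
  have hp : 0 < p := by omega
  have hlast : k ≤ halfVal (p - 1) (p - 1 + (q - p)) := by
    have := hstep (p - 1)
    rw [show p - 1 + 1 = p by omega, show p + (q - p) = q by omega] at this
    omega
  obtain ⟨c, hc, he⟩ := exists_eq_of_small_steps (fun i => halfVal i (i + (q - p)))
    (by simp [halfVal]) (p - 1) (fun i _ => hstep i) k hlast
  refine ⟨p - 1 - c, p - 1 - c, c, c + (q - p), by omega, by omega, ?_⟩
  have h1 : val (p - 1 - c) (p - 1 - c) = 1 := if_pos rfl
  have h2 : val c (c + (q - p)) = 2 * halfVal c (c + (q - p)) := if_neg (by omega)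
  rw [h1, h2, one_xor_two_mul, he]

/-- Nonzero values `2k`, from two parts off the diagonal. -/
lemma exists_even_option {p q : ℕ} (hpq : p < q) {k : ℕ} (hk0 : 0 < k) (hk : k < halfVal p q) :
    ∃ a b c d, a + c + 1 = p ∧ b + d + 1 = q ∧ val a b ^^^ val c d = 2 * k := by
  -- It suffices to find two parts off the diagonal whose halves have Nim-sum `k`.
  suffices H : ∃ a b c d, a + c + 1 = p ∧ b + d + 1 = q ∧ a ≠ b ∧ c ≠ d ∧
      halfVal a b ^^^ halfVal c d = k by
    obtain ⟨a, b, c, d, h1, h2, hab, hcd, he⟩ := H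
    refine ⟨a, b, c, d, h1, h2, ?_⟩
    rw [val, val, if_neg hab, if_neg hcd, two_mul_xor_two_mul, he]
  have hspec := halfVal_spec hpq.ne
  have hp : 2 ≤ p := by omega
  have hspec' := halfVal_spec (a := p - 2) (b := q - 1) (by omega)
  by_cases hrow : k ≤ halfVal (p - 2) (q - 1)
  · obtain ⟨i, hi, he⟩ := exists_eq_of_small_steps (fun i => halfVal i (q - 1))
      (by simp [halfVal]) (p - 2)
      (by
        intro i hi
        have h1 := halfVal_spec (a := i + 1) (b := q - 1) (by omega)
        have h2 := halfVal_spec (a := i) (b := q - 1) (by omega)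
        omega) k hrow
    refine ⟨p - 1 - i, 0, i, q - 1, by omega, by omega, by omega, by omega, ?_⟩
    have h0 : halfVal (p - 1 - i) 0 = 0 := by simp [halfVal]
    rw [h0, he, Nat.zero_xor]
  · by_cases hs : (p + q) % 5 = 1 ∧ 2 * (p + q - 1) / 5 ≤ p
    · -- Here `k = ⌊2(p+q-1)/5⌋ - 1` is odd, so `1 ^^^ (k - 1) = k`.
      have hkodd : k = 2 * ((k - 1) / 2) + 1 := by omega
      have hflip : 1 ^^^ (k - 1) = k := by
        have := one_xor_two_mul ((k - 1) / 2)
        rw [← hkodd] at this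
        rwa [show 2 * ((k - 1) / 2) = k - 1 by omega] at this
      by_cases hq : q = p + 1
      · refine ⟨2, 1, p - 3, q - 2, ?_, by omega, by omega, by omega, ?_⟩
        · omega
        · have h1 : halfVal 2 1 = 1 := by simp [halfVal]
          have h2 : halfVal (p - 3) (q - 2) = k - 1 := by
            have h3 := halfVal_spec (a := p - 3) (b := q - 2) (by omega)
            omega
          rw [h1, h2, hflip]
      · refine ⟨1, 2, p - 2, q - 3, by omega, by omega, by omega, by omega, ?_⟩
        have h1 : halfVal 1 2 = 1 := by simp [halfVal]
        have h2 : halfVal (p - 2) (q - 3) = k - 1 := by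
          have h3 := halfVal_spec (a := p - 2) (b := q - 3) (by omega)
          omega
        rw [h1, h2, hflip]
    · -- Here `halfVal p q = p` and `k = p - 1`, which forces `q ≥ p + 2`.
      have hq : p + 2 ≤ q := by omega
      have hkp : k = p - 1 := by omega
      have hsum : 5 * p + 2 < 2 * (p + q) := by omega
      have h2 : halfVal (p - 1) (q - 2) = k := by
        have h3 := halfVal_spec (a := p - 1) (b := q - 2) (by omega)
        omega
      refine ⟨0, 1, p - 1, q - 2, by omega, by omega, by omega, by omega, ?_⟩
      have h0 : halfVal 0 1 = 0 := by simp [halfVal]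
      rw [h0, h2, Nat.zero_xor]

lemma exists_option_of_lt {p q : ℕ} (hpq : p < q) {k : ℕ} (hk0 : 0 < k) (hk : k < val p q) :
    ∃ a b c d, a + c + 1 = p ∧ b + d + 1 = q ∧ val a b ^^^ val c d = k := by
  have hv : val p q = 2 * halfVal p q := if_neg (by omega)
  rcases Nat.even_or_odd' k with ⟨j, rfl | rfl⟩
  · exact exists_even_option hpq (by omega) (by omega)
  · exact exists_odd_option hpq (by omega)

lemma exists_option {p q k : ℕ} (hk0 : 0 < k) (hk : k < val p q) :
    ∃ a b c d, a + c + 1 = p ∧ b + d + 1 = q ∧ val a b ^^^ val c d = k := by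
  rcases lt_trichotomy p q with hlt | heq | hgt
  · exact exists_option_of_lt hlt hk0 hk
  · have : val p q = 1 := if_pos heq
    omega
  · rw [val_comm] at hk
    obtain ⟨a, b, c, d, h1, h2, he⟩ := exists_option_of_lt hgt hk0 hk
    exact ⟨b, a, d, c, h2, h1, by rw [val_comm b a, val_comm d c, he]⟩

/-! ### The mex recursion -/

lemma mex_eq {S : Set ℕ} {v : ℕ} (hv : v ∉ S) (hlt : ∀ k < v, k ∈ S) : mex S = v := by
  apply le_antisymm
  · exact Nat.sInf_le hv
  · by_contra hcon
    exact Nat.sInf_mem (s := {n : ℕ | n ∉ S}) ⟨v, hv⟩ (hlt _ (not_le.mp hcon))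

/-- The terminating move is to `0`, unless exactly one argument vanishes. -/
lemma h_xor_h (p q : ℕ) : h p ^^^ h q = if (p = 0 ↔ q = 0) then 0 else 1 := by
  cases p <;> cases q <;> simp [h]

theorem f_eq_val (p q : ℕ) : f p q = val p q := by
  induction p using Nat.strong_induction_on generalizing q with
  | _ p ih =>
    rw [f]
    apply mex_eq
    · simp only [Set.mem_union, Set.mem_singleton_iff, Set.mem_iUnion, not_or, not_exists]
      constructor
      · rw [h_xor_h]
        rcases Nat.eq_zero_or_pos p with rfl | hp <;> rcases Nat.eq_zero_or_pos q with rfl | hq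
        · simp [val]
        · simp [val, halfVal, hq.ne, hq.ne']
        · simp [val, halfVal, hp.ne']
        · simpa [hp.ne', hq.ne'] using (val_pos hp hq).ne'
      · intro a ha b hb he
        rw [ih a ha, ih (p - 1 - a) (by omega)] at he
        have := val_not_option a b (p - 1 - a) (q - 1 - b)
        rw [show a + (p - 1 - a) + 1 = p by omega, show b + (q - 1 - b) + 1 = q by omega] at this
        exact this he.symm
    · intro k hk
      simp only [Set.mem_union, Set.mem_singleton_iff, Set.mem_iUnion]
      rcases Nat.eq_zero_or_pos k with rfl | hk0
      · left
        rw [h_xor_h]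
        rcases Nat.eq_zero_or_pos p with rfl | hp <;> rcases Nat.eq_zero_or_pos q with rfl | hq
        · simp
        · simp [val, halfVal, hq.ne] at hk
        · simp [val, halfVal, hp.ne'] at hk
        · simp [hp.ne', hq.ne']
      · right
        obtain ⟨a, b, c, d, rfl, rfl, he⟩ := exists_option hk0 hk
        refine ⟨a, by omega, b, by omega, ?_⟩
        rw [ih a (by omega), ih _ (by omega), show a + c + 1 - 1 - a = c by omega,
          show b + d + 1 - 1 - b = d by omega, he]

lemma F_eq {p q : ℕ} (hs : 0 < p + q) : F p q = 2 * (2 * (p + q - 1) / 5) := by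
  unfold F idx
  have hr : (p + q) % 5 = 0 ∨ (p + q) % 5 = 1 ∨ (p + q) % 5 = 2 ∨ (p + q) % 5 = 3 ∨
      (p + q) % 5 = 4 := by omega
  rcases hr with hr | hr | hr | hr | hr <;> simp only [hr] <;> norm_num <;> omega

theorem stmt0 (p q : ℕ) (hpq : p ≤ q) :
    f p q =
      if p = q then 1
      else if (q : ℤ) < 2 * (p : ℤ) - |(p : ℤ) - 2| / 2 then F p q
      else 2 * p := by
  rw [f_eq_val]
  unfold val
  by_cases he : p = q
  · rw [if_pos he, if_pos he]
  · rw [if_neg he, if_neg he]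
    have hspec := halfVal_spec he
    rw [F_eq (by omega)]
    rcases abs_cases ((p : ℤ) - 2) with ⟨h1, h2⟩ | ⟨h1, h2⟩ <;> rw [h1] <;> split_ifs <;> omega
end

section
/- f(1,1) = 1, and f(1,q) = 2 for every natural number q ≥ 2. -/
theorem mex_eq_s2 {S : Set ℕ} {n : ℕ} (hn : n ∉ S) (hlt : ∀ m < n, m ∈ S) : mex S = n := by
  unfold mex
  apply le_antisymm
  · exact Nat.sInf_le hn
  · refine le_csInf ⟨n, hn⟩ fun m hm => ?_
    by_contra hc
    exact hm (hlt m (by omega))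

theorem f_zero_zero : f 0 0 = 1 := by
  rw [f]
  apply mex_eq_s2 <;> simp [h]

theorem f_zero_pos {q : ℕ} (hq : 1 ≤ q) : f 0 q = 0 := by
  obtain ⟨k, rfl⟩ : ∃ k, q = k + 1 := ⟨q - 1, by omega⟩
  rw [f]
  apply mex_eq_s2 <;> simp [h]

theorem stmt2 : f 1 1 = 1 ∧ ∀ q : ℕ, 2 ≤ q → f 1 q = 2 := by
  constructor
  · rw [f]
    apply mex_eq_s2 <;> simp [h]
  · intro q hq
    obtain ⟨k, rfl⟩ : ∃ k, q = k + 2 := ⟨q - 2, by omega⟩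
    rw [f]
    apply mex_eq_s2
    · simp only [Set.mem_union, Set.mem_iUnion, Set.mem_singleton_iff, not_or, not_exists]
      refine ⟨by simp [h], fun p' hp' q' hq' => ?_⟩
      obtain rfl : p' = 0 := by omega
      rcases Nat.eq_zero_or_pos q' with rfl | hpos
      · simp [f_zero_zero, f_zero_pos]
      · rw [f_zero_pos hpos]
        rcases Nat.eq_zero_or_pos (k + 2 - 1 - q') with h0 | h0
        · rw [h0, Nat.sub_zero, Nat.sub_self, f_zero_zero]
          simp
        · rw [Nat.sub_zero, Nat.sub_self, f_zero_pos h0]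
          simp
    · intro m hm
      simp only [Set.mem_union, Set.mem_iUnion, Set.mem_singleton_iff]
      interval_cases m
      · left
        simp [h]
      · right
        exact ⟨0, by omega, 0, by omega, by simp [f_zero_zero, f_zero_pos]⟩
end

section
/- For all natural numbers p, q with p ≥ 1 and p < q < 2p − ⌊|p−2|/2⌋ (an inequality of integers), one has f(p−1, q−1) ≥ f(p,q) − 2. -/
/-- Half of the value of `f` off the diagonal. -/
def G (p q : ℕ) : ℕ :=
  if (p = 1 ∧ q = 2) ∨ (p = 2 ∧ q = 1) then 1 else min (min p q) ((2 * (p + q) - 2) / 5)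

/-- `n` is (the nimber of) an option of the position `(p, q)`. The two parts `(a, b)` and `(c, d)`
are described by additive equations, avoiding truncated subtraction. -/
def Opt (p q n : ℕ) : Prop :=
  n = h p ^^^ h q ∨ ∃ a b c d, a + c + 1 = p ∧ b + d + 1 = q ∧ f a b ^^^ f c d = n

lemma G_comm (p q : ℕ) : G p q = G q p := by
  unfold G; split_ifs <;> omega

lemma G_diag (p q : ℕ) : G (p + 1) (q + 1) ≤ G p q + 1 := by
  unfold G; split_ifs <;> omega

lemma G_row (p q : ℕ) : G (p + 1) q ≤ G p q + 1 := by
  unfold G; split_ifs <;> omega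

lemma G_zero (q : ℕ) : G 0 q = 0 := by
  simp [G]

/-- The defining inequalities of `G`, in a form suited to linear arithmetic. -/
lemma G_spec (p q : ℕ) (hne : p ≠ q) :
    (p + q = 3 ∧ 1 ≤ p ∧ 1 ≤ q ∧ G p q = 1) ∨
    (¬ (p + q = 3 ∧ 1 ≤ p ∧ 1 ≤ q) ∧ G p q ≤ p ∧ G p q ≤ q ∧ 5 * G p q + 2 ≤ 2 * (p + q) ∧
      (G p q = p ∨ G p q = q ∨ 2 * (p + q) < 5 * G p q + 7)) := by
  unfold G
  split_ifs
  · left; omega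
  · right
    generalize hx : min (min p q) ((2 * (p + q) - 2) / 5) = x
    omega

lemma two_mul_xor_two_mul_s10 (x y : ℕ) : (2 * x) ^^^ (2 * y) = 2 * (x ^^^ y) := by
  have := Nat.shiftLeft_xor_distrib (a := x) (b := y) (i := 1)
  simp only [Nat.shiftLeft_eq, pow_one] at this
  rw [mul_comm 2 x, mul_comm 2 y, mul_comm 2, this]

lemma two_mul_xor_one (x : ℕ) : (2 * x) ^^^ 1 = 2 * x + 1 := by
  apply Nat.eq_of_testBit_eq
  intro i
  cases i <;> simp [Nat.testBit_succ, Nat.testBit_zero]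

lemma xor_le_add' (x y : ℕ) : x ^^^ y ≤ x + y := by
  induction x using Nat.strong_induction_on generalizing y with
  | _ x ih =>
    rcases Nat.eq_zero_or_pos x with rfl | hx
    · simp
    · have h1 := ih (x / 2) (by omega) (y / 2)
      rw [← Nat.xor_div_two] at h1
      have h2 : (x ^^^ y) % 2 = (x % 2 + y % 2) % 2 := by
        have := Nat.xor_mod_two_pow (a := x) (b := y) (n := 1)
        rw [pow_one] at this
        rw [this]
        rcases Nat.mod_two_eq_zero_or_one x with h | h <;>
        rcases Nat.mod_two_eq_zero_or_one y with h' | h' <;> simp [h, h']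
      omega

/-- A sequence starting at `0` with increments at most `1` skips no value. -/
lemma exists_eq_of_step (g : ℕ → ℕ) (h0 : g 0 = 0) (hs : ∀ k, g (k + 1) ≤ g k + 1) (K n : ℕ)
    (hn : n ≤ g K) : ∃ k ≤ K, g k = n := by
  induction K with
  | zero => exact ⟨0, le_rfl, by omega⟩
  | succ K ih =>
    by_cases hK : n ≤ g K
    · obtain ⟨k, hk, rfl⟩ := ih hK
      exact ⟨k, by omega, rfl⟩
    · exact ⟨K + 1, le_rfl, by have := hs K; omega⟩

lemma f_eq_mex (p q : ℕ) : f p q = mex {n | Opt p q n} := by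
  rw [f]
  congr 1
  ext n
  simp only [Set.mem_union, Set.mem_singleton_iff, Set.mem_iUnion, Set.mem_ofPred_eq, Opt]
  refine or_congr Iff.rfl ⟨?_, ?_⟩
  · rintro ⟨a, ha, b, hb, rfl⟩
    exact ⟨a, b, p - 1 - a, q - 1 - b, by omega, by omega, rfl⟩
  · rintro ⟨a, b, c, d, rfl, rfl, rfl⟩
    refine ⟨a, by omega, b, by omega, ?_⟩
    rw [show a + c + 1 - 1 - a = c by omega, show b + d + 1 - 1 - b = d by omega]

lemma f_eq_of_opt {p q m : ℕ} (h1 : ∀ n < m, Opt p q n) (h2 : ¬ Opt p q m) : f p q = m := by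
  rw [f_eq_mex, mex]
  apply le_antisymm
  · exact Nat.sInf_le h2
  · refine le_csInf ⟨m, h2⟩ fun n hn => ?_
    by_contra hlt
    exact hn (h1 n (by omega))

lemma f_comm (p q : ℕ) : f p q = f q p := by
  induction p using Nat.strong_induction_on generalizing q with
  | _ p ih =>
    rw [f_eq_mex, f_eq_mex]
    congr 1
    ext n
    simp only [Set.mem_ofPred_eq, Opt]
    rw [Nat.xor_comm (h p)]
    refine or_congr Iff.rfl ⟨?_, ?_⟩
    · rintro ⟨a, b, c, d, h1, h2, rfl⟩
      exact ⟨b, a, d, c, h2, h1, by rw [ih a (by omega), ih c (by omega)]⟩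
    · rintro ⟨a, b, c, d, h1, h2, rfl⟩
      exact ⟨b, a, d, c, h2, h1, by rw [ih b (by omega), ih d (by omega)]⟩

lemma not_attained {a b c d : ℕ} (hlt : a + c < b + d) (hab : a ≠ b) (hcd : c ≠ d) :
    G a b ^^^ G c d ≠ G (a + c + 1) (b + d + 1) := by
  intro he
  have hle := xor_le_add' (G a b) (G c d)
  -- Two parts of exceptional shape have Nim-sum `1 ^^^ 1 = 0`.
  have hself : G a b = G c d → G (a + c + 1) (b + d + 1) = 0 := by
    intro h; rw [← he, h, Nat.xor_self]
  rw [he] at hle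
  have h1 := G_spec a b hab
  have h2 := G_spec c d hcd
  have h3 := G_spec (a + c + 1) (b + d + 1) (by omega)
  omega

lemma even_attained {p q n : ℕ} (hpq : p < q) (hn : 1 ≤ n) (hm : n < G p q) :
    ∃ a b c d, a + c + 1 = p ∧ b + d + 1 = q ∧ a ≠ b ∧ c ≠ d ∧ G a b ^^^ G c d = n := by
  have hG := G_spec p q (by omega)
  have hp : 2 ≤ p := by omega
  by_cases h1 : n ≤ G (p - 2) (q - 1)
  · obtain ⟨i, hi, rfl⟩ := exists_eq_of_step (fun i => G i (q - 1)) (G_zero _)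
      (fun k => G_row k _) _ _ h1
    refine ⟨i, q - 1, p - 1 - i, 0, by omega, by omega, by omega, by omega, ?_⟩
    rw [G_comm _ 0, G_zero, Nat.xor_zero]
  have hG' := G_spec (p - 2) (q - 1) (by omega)
  by_cases h2 : 2 * (p + q) = 5 * n + 7
  · obtain ⟨t, ht⟩ : ∃ t, p + q = 5 * t + 1 := ⟨(p + q) / 5, by omega⟩
    have hnt : n = 2 * (t - 1) + 1 := by omega
    have h12 : G 1 2 = 1 := rfl
    have h21 : G 2 1 = 1 := rfl
    by_cases h3 : q = p + 1
    -- Here the complement of `(1, 2)` is diagonal, so `(2, 1)` is split off instead.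
    · refine ⟨p - 3, q - 2, 2, 1, by omega, by omega, by omega, by omega, ?_⟩
      have hG2 := G_spec (p - 3) (q - 2) (by omega)
      have : G (p - 3) (q - 2) = 2 * (t - 1) := by omega
      rw [this, h21, two_mul_xor_one, hnt]
    · refine ⟨p - 2, q - 3, 1, 2, by omega, by omega, by omega, by omega, ?_⟩
      have hG2 := G_spec (p - 2) (q - 3) (by omega)
      have : G (p - 2) (q - 3) = 2 * (t - 1) := by omega
      rw [this, h12, two_mul_xor_one, hnt]
  · have hnp : n = p - 1 := by omega
    refine ⟨p - 1, q - 2, 0, 1, by omega, by omega, by omega, by omega, ?_⟩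
    rw [G_zero, Nat.xor_zero]
    have hG2 := G_spec (p - 1) (q - 2) (by omega)
    omega

lemma f_eq (p q : ℕ) : f p q = if p = q then 1 else 2 * G p q := by
  induction hs : p + q using Nat.strong_induction_on generalizing p q with
  | _ s ih =>
    have ihd : ∀ a, a + a < s → f a a = 1 := fun a ha => by rw [ih _ ha a a rfl, if_pos rfl]
    have iho : ∀ a b, a + b < s → a ≠ b → f a b = 2 * G a b :=
      fun a b hab hne => by rw [ih _ hab a b rfl, if_neg hne]
    by_cases hd : p = q
    · subst hd
      rw [if_pos rfl]
      apply f_eq_of_opt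
      · intro n hn
        left
        rw [Nat.xor_self]; omega
      · rintro (h0 | ⟨a, b, c, d, h1, h2, h3⟩)
        · rw [Nat.xor_self] at h0; omega
        · by_cases hab : a = b
          · obtain rfl : c = d := by omega
            subst hab
            rw [ihd a (by omega), ihd c (by omega)] at h3
            simp at h3
          · rw [iho a b (by omega) hab, iho c d (by omega) (by omega), two_mul_xor_two_mul_s10] at h3
            omega
    rw [if_neg hd]
    -- By symmetry the case `p < q` suffices.
    obtain ⟨p', q', hlt, hs', hf, hG⟩ :
        ∃ p' q', p' < q' ∧ p' + q' = s ∧ f p q = f p' q' ∧ G p q = G p' q' := by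
      rcases Nat.lt_or_gt_of_ne hd with hlt | hlt
      · exact ⟨p, q, hlt, hs, rfl, rfl⟩
      · exact ⟨q, p, hlt, by omega, f_comm _ _, G_comm _ _⟩
    rw [hf, hG]
    clear hf hG hd hs p q
    apply f_eq_of_opt
    · intro n hn
      obtain ⟨k, rfl | rfl⟩ : ∃ k, n = 2 * k ∨ n = 2 * k + 1 := ⟨n / 2, by omega⟩
      · have hk : k < G p' q' := by omega
        rcases Nat.eq_zero_or_pos k with rfl | hpos
        · left
          have hp : p' ≠ 0 := by rintro rfl; rw [G_zero] at hk; omega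
          obtain ⟨x, rfl⟩ := Nat.exists_eq_add_one_of_ne_zero hp
          obtain ⟨y, rfl⟩ := Nat.exists_eq_add_one_of_ne_zero (show q' ≠ 0 by omega)
          simp [h]
        · right
          obtain ⟨a, b, c, d, h1, h2, h3, h4, h5⟩ := even_attained hlt hpos hk
          refine ⟨a, b, c, d, h1, h2, ?_⟩
          rw [iho a b (by omega) h3, iho c d (by omega) h4, two_mul_xor_two_mul_s10, h5]
      · right
        have hp : p' ≠ 0 := by rintro rfl; rw [G_zero] at hn; omega
        have hk : k ≤ G (p' - 1) (p' - 1 + (q' - p')) := by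
          have := G_diag (p' - 1) (p' - 1 + (q' - p'))
          rw [show p' - 1 + 1 = p' by omega, show p' - 1 + (q' - p') + 1 = q' by omega] at this
          omega
        obtain ⟨i, hi, hik⟩ := exists_eq_of_step (fun i => G i (i + (q' - p'))) (G_zero _)
          (fun k => by
            have := G_diag k (k + (q' - p'))
            rwa [show k + (q' - p') + 1 = k + 1 + (q' - p') by omega] at this) _ _ hk
        refine ⟨i, i + (q' - p'), p' - 1 - i, p' - 1 - i, by omega, by omega, ?_⟩
        rw [iho _ _ (by omega) (by omega), ihd _ (by omega), two_mul_xor_one]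
        rw [hik]
    · rintro (h0 | ⟨a, b, c, d, h1, h2, h3⟩)
      · obtain ⟨y, rfl⟩ := Nat.exists_eq_add_one_of_ne_zero (show q' ≠ 0 by omega)
        cases p' with
        | zero => rw [G_zero] at h0; simp [h] at h0
        | succ x =>
          simp only [h, Nat.xor_self] at h0
          have := G_spec (x + 1) (y + 1) (by omega)
          omega
      · by_cases hab : a = b
        · subst hab
          rw [ihd a (by omega), iho c d (by omega) (by omega), Nat.xor_comm,
            two_mul_xor_one] at h3
          omega
        · by_cases hcd : c = d
          · subst hcd
            rw [ihd c (by omega), iho a b (by omega) hab, two_mul_xor_one] at h3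
            omega
          · rw [iho a b (by omega) hab, iho c d (by omega) hcd, two_mul_xor_two_mul_s10] at h3
            subst h1 h2
            exact not_attained (by omega) hab hcd (by omega)

theorem stmt10 (p q : ℕ) (hp : 1 ≤ p) (hpq : p < q)
    (hq : (q : ℤ) < 2 * (p : ℤ) - |(p : ℤ) - 2| / 2) :
    (f p q : ℤ) - 2 ≤ (f (p - 1) (q - 1) : ℤ) := by
  have h1 := G_diag (p - 1) (q - 1)
  rw [show p - 1 + 1 = p by omega, show q - 1 + 1 = q by omega] at h1
  rw [f_eq p q, f_eq (p - 1) (q - 1), if_neg (by omega), if_neg (by omega)]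
  omega
end

section
/- For all natural numbers p ≥ 3 and q ≥ 3, there exist natural numbers a, b, c, d with a + b = p − 2 and c + d = q − 2 such that f(a,c) ⊕ f(b,d) = 0; consequently mex({f(a,c) ⊕ f(b,d) : a + b = p − 2, c + d = q − 2}) ≥ 1, and therefore mex({mex({f(a,c) ⊕ f(b,d) : a + b = p − 2, c + d = q − 2})}) = 0. -/
lemma mex_eq_zero {S : Set ℕ} (hS : 0 ∉ S) : mex S = 0 :=
  Nat.sInf_eq_zero.mpr (Or.inl hS)

/-- Finiteness matters here: `mex Set.univ` takes the default value `0`. -/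
lemma one_le_mex {S : Set ℕ} (hfin : S.Finite) (hS : 0 ∈ S) : 1 ≤ mex S := by
  have hne : {n : ℕ | n ∉ S}.Nonempty := hfin.exists_notMem
  have hmem : mex S ∉ S := Nat.sInf_mem hne
  exact Nat.one_le_iff_ne_zero.mpr fun h0 => hmem (h0 ▸ hS)

lemma f_zero_left {n : ℕ} (hn : 1 ≤ n) : f 0 n = 0 := by
  obtain ⟨m, rfl⟩ := Nat.exists_eq_add_of_le' hn
  rw [f]
  exact mex_eq_zero (by simp [h])

lemma f_zero_right {n : ℕ} (hn : 1 ≤ n) : f n 0 = 0 := by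
  obtain ⟨m, rfl⟩ := Nat.exists_eq_add_of_le' hn
  rw [f]
  exact mex_eq_zero (by simp [h])

lemma finite_options (P Q : ℕ) :
    {x : ℕ | ∃ a b c d : ℕ, a + b = P ∧ c + d = Q ∧ x = f a c ^^^ f b d}.Finite := by
  refine ((Finset.HasAntidiagonal.antidiagonal P ×ˢ Finset.HasAntidiagonal.antidiagonal Q).image
    fun z => f z.1.1 z.2.1 ^^^ f z.1.2 z.2.2).finite_toSet.subset ?_
  rintro x ⟨a, b, c, d, hab, hcd, rfl⟩
  exact Finset.mem_coe.mpr <| Finset.mem_image.mpr ⟨((a, b), (c, d)), by simp [hab, hcd], rfl⟩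

theorem stmt14 (p q : ℕ) (hp : 3 ≤ p) (hq : 3 ≤ q) :
    (∃ a b c d : ℕ, a + b = p - 2 ∧ c + d = q - 2 ∧ f a c ^^^ f b d = 0) ∧
    1 ≤ mex {x : ℕ | ∃ a b c d : ℕ,
          a + b = p - 2 ∧ c + d = q - 2 ∧ x = f a c ^^^ f b d} ∧
    mex {mex {x : ℕ | ∃ a b c d : ℕ,
          a + b = p - 2 ∧ c + d = q - 2 ∧ x = f a c ^^^ f b d}} = 0 := by
  have hzero : f 0 (q - 2) ^^^ f (p - 2) 0 = 0 := by
    rw [f_zero_left (by omega), f_zero_right (by omega), Nat.xor_self]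
  have hmex := one_le_mex (finite_options (p - 2) (q - 2))
    ⟨0, p - 2, q - 2, 0, by omega, by omega, hzero.symm⟩
  refine ⟨⟨0, p - 2, q - 2, 0, by omega, by omega, hzero⟩, hmex, mex_eq_zero ?_⟩
  rw [Set.mem_singleton_iff]
  omega
end
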